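/- Let f_i(x) = a_i x + b_i (i = 1, 2, 3, 4) be monotone nondecreasing linear functions, none of which is the identity, with a_1, a_3 ≥ 1 and 0 ≤ a_2, a_4 < 1. If γ(f_1) ≥ γ(f_2) ≥ γ(f_3) ≥ γ(f_4), then for every x ∈ ℝ, f_4∘f_3∘f_2∘f_1(x) ≤ max{ f_4∘f_1∘f_3∘f_2(x), f_3∘f_2∘f_4∘f_1(x) }. -/

import Mathlib

/-!
Writing `f`, `g` for affine maps with slopes `a`, `a'`, the difference `f ∘ g - g ∘ f` is constant
and, for any point `c`, equals `(a - 1) (g c - c) - (a' - 1) (f c - c)`. So if `f c ≤ c ≤ g c`,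
then `g ∘ f ≤ f ∘ g` when both slopes are at least `1`, and `f ∘ g ≤ g ∘ f` when both are at
most `1`.

Apply this with `g = f₃ ∘ f₂` at `c = γ(f₃)`, which is finite because it lies between `γ(f₄)` and
`γ(f₂)`. The order of the `γ(fᵢ)` says that `f₁` and `f₄` do not move `c` up and that `g`
does not move it down. If `g` has slope at least `1`, then `g ∘ f₁ ≤ f₁ ∘ g`, and `f₄` is monotone;
otherwise `f₄ ∘ g ≤ g ∘ f₄`.
-/

/-- `γ` of the linear function `x ↦ a x + b`: the fixed point `b / (1 - a)` if `a ≠ 1`,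
`+∞` if `a = 1` and `b < 0`, `-∞` if `a = 1` and `b ≥ 0`. -/
noncomputable def gam (a b : ℝ) : EReal :=
  if a = 1 then (if b < 0 then (⊤ : EReal) else (⊥ : EReal))
  else ((b / (1 - a) : ℝ) : EReal)

section OrderedRing

variable {R : Type*} [CommRing R]

lemma affine_comp_sub_affine_comp (a b a' b' c x : R) :
    (a * (a' * x + b') + b) - (a' * (a * x + b) + b') =
      (a - 1) * (a' * c + b' - c) - (a' - 1) * (a * c + b - c) := by
  ring

section PartialOrder

variable [PartialOrder R] [IsOrderedRing R] {a b a' b' c : R}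

lemma affine_comp_le_affine_comp_of_one_le (ha : 1 ≤ a) (ha' : 1 ≤ a')
    (hf : a * c + b ≤ c) (hg : c ≤ a' * c + b') (x : R) :
    a' * (a * x + b) + b' ≤ a * (a' * x + b') + b := by
  rw [← sub_nonneg, affine_comp_sub_affine_comp a b a' b' c, sub_nonneg]
  calc (a' - 1) * (a * c + b - c) ≤ 0 :=
        mul_nonpos_of_nonneg_of_nonpos (sub_nonneg.2 ha') (sub_nonpos.2 hf)
    _ ≤ (a - 1) * (a' * c + b' - c) := mul_nonneg (sub_nonneg.2 ha) (sub_nonneg.2 hg)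

lemma affine_comp_le_affine_comp_of_le_one (ha : a ≤ 1) (ha' : a' ≤ 1)
    (hf : a * c + b ≤ c) (hg : c ≤ a' * c + b') (x : R) :
    a * (a' * x + b') + b ≤ a' * (a * x + b) + b' := by
  rw [← sub_nonpos, affine_comp_sub_affine_comp a b a' b' c, sub_nonpos]
  calc (a - 1) * (a' * c + b' - c) ≤ 0 :=
        mul_nonpos_of_nonpos_of_nonneg (sub_nonpos.2 ha) (sub_nonneg.2 hg)
    _ ≤ (a' - 1) * (a * c + b - c) :=
        mul_nonneg_of_nonpos_of_nonpos (sub_nonpos.2 ha') (sub_nonpos.2 hf)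

end PartialOrder

theorem affine_comp_le_max_affine_comp [LinearOrder R] [IsOrderedRing R]
    {a₁ b₁ a₂ b₂ a₃ b₃ a₄ b₄ c : R} (ha₁ : 1 ≤ a₁) (ha₃ : 0 ≤ a₃) (ha₄ : 0 ≤ a₄) (ha₄' : a₄ ≤ 1)
    (h₁ : a₁ * c + b₁ ≤ c) (h₂ : c ≤ a₂ * c + b₂) (h₃ : c ≤ a₃ * c + b₃)
    (h₄ : a₄ * c + b₄ ≤ c) (x : R) :
    a₄ * (a₃ * (a₂ * (a₁ * x + b₁) + b₂) + b₃) + b₄ ≤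
      max (a₄ * (a₁ * (a₃ * (a₂ * x + b₂) + b₃) + b₁) + b₄)
        (a₃ * (a₂ * (a₄ * (a₁ * x + b₁) + b₄) + b₂) + b₃) := by
  have comp_eq (y : R) : a₃ * (a₂ * y + b₂) + b₃ = a₃ * a₂ * y + (a₃ * b₂ + b₃) := by ring
  have le_comp : c ≤ a₃ * a₂ * c + (a₃ * b₂ + b₃) := by
    calc c ≤ a₃ * c + b₃ := h₃
      _ ≤ a₃ * (a₂ * c + b₂) + b₃ := by gcongr
      _ = a₃ * a₂ * c + (a₃ * b₂ + b₃) := comp_eq c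
  simp only [comp_eq]
  rcases le_total 1 (a₃ * a₂) with hslope | hslope
  · apply le_max_of_le_left
    gcongr a₄ * ?_ + b₄
    exact affine_comp_le_affine_comp_of_one_le ha₁ hslope h₁ le_comp x
  · apply le_max_of_le_right
    exact affine_comp_le_affine_comp_of_le_one ha₄' hslope h₄ le_comp (a₁ * x + b₁)

end OrderedRing

section Gam

variable {a b c : ℝ}

lemma gam_of_ne_one (ha : a ≠ 1) : gam a b = ((b / (1 - a) : ℝ) : EReal) :=
  if_neg ha

lemma coe_le_gam_iff_of_lt_one (ha : a < 1) : (c : EReal) ≤ gam a b ↔ c ≤ a * c + b := by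
  rw [gam_of_ne_one ha.ne, EReal.coe_le_coe_iff, le_div_iff₀ (sub_pos.2 ha)]
  constructor <;> intro h <;> linarith

lemma gam_le_coe_iff_of_lt_one (ha : a < 1) : gam a b ≤ (c : EReal) ↔ a * c + b ≤ c := by
  rw [gam_of_ne_one ha.ne, EReal.coe_le_coe_iff, div_le_iff₀ (sub_pos.2 ha)]
  constructor <;> intro h <;> linarith

lemma affine_le_self_of_coe_le_gam (ha : 1 ≤ a) (h : (c : EReal) ≤ gam a b) :
    a * c + b ≤ c := by
  rcases ha.eq_or_lt with rfl | ha
  · have hb : b < 0 := by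
      by_contra hb
      simp [gam, hb] at h
    linarith
  · rw [gam_of_ne_one ha.ne', EReal.coe_le_coe_iff, le_div_iff_of_neg (sub_neg.2 ha)] at h
    linarith

lemma affine_eq_self_of_gam_eq_coe (h : gam a b = (c : EReal)) : a * c + b = c := by
  have ha : a ≠ 1 := by
    rintro rfl
    by_cases hb : b < 0 <;> simp [gam, hb] at h
  rw [gam_of_ne_one ha, EReal.coe_eq_coe_iff, div_eq_iff (sub_ne_zero.2 ha.symm)] at h
  linarith

end Gam

theorem stmt11_general {a₁ b₁ a₂ b₂ a₃ b₃ a₄ b₄ : ℝ}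
    (ha₁ : 1 ≤ a₁) (ha₂ : a₂ < 1) (ha₃ : 0 ≤ a₃) (ha₄ : 0 ≤ a₄) (ha₄' : a₄ < 1)
    (h₃₁ : gam a₃ b₃ ≤ gam a₁ b₁) (h₃₂ : gam a₃ b₃ ≤ gam a₂ b₂)
    (h₄₃ : gam a₄ b₄ ≤ gam a₃ b₃) (x : ℝ) :
    a₄ * (a₃ * (a₂ * (a₁ * x + b₁) + b₂) + b₃) + b₄ ≤
      max (a₄ * (a₁ * (a₃ * (a₂ * x + b₂) + b₃) + b₁) + b₄)
        (a₃ * (a₂ * (a₄ * (a₁ * x + b₁) + b₄) + b₂) + b₃) := by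
  have ne_top : gam a₃ b₃ ≠ ⊤ :=
    ne_top_of_le_ne_top (gam_of_ne_one ha₂.ne ▸ EReal.coe_ne_top _) h₃₂
  have ne_bot : gam a₃ b₃ ≠ ⊥ :=
    ne_bot_of_le_ne_bot (gam_of_ne_one ha₄'.ne ▸ EReal.coe_ne_bot _) h₄₃
  obtain ⟨c, hc⟩ : ∃ c : ℝ, gam a₃ b₃ = c := ⟨_, (EReal.coe_toReal ne_top ne_bot).symm⟩
  rw [hc] at h₃₁ h₃₂ h₄₃
  exact affine_comp_le_max_affine_comp ha₁ ha₃ ha₄ ha₄'.le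
    (affine_le_self_of_coe_le_gam ha₁ h₃₁) ((coe_le_gam_iff_of_lt_one ha₂).1 h₃₂)
    (affine_eq_self_of_gam_eq_coe hc).ge ((gam_le_coe_iff_of_lt_one ha₄').1 h₄₃) x

/-- For non-identity monotone linear `fᵢ(x) = aᵢx + bᵢ` with `a₁, a₃ ≥ 1`,
`0 ≤ a₂, a₄ < 1` and `γ(f₁) ≥ γ(f₂) ≥ γ(f₃) ≥ γ(f₄)`:
`f₄∘f₃∘f₂∘f₁ ≤ max (f₄∘f₁∘f₃∘f₂) (f₃∘f₂∘f₄∘f₁)` pointwise. -/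
theorem stmt11 (a1 b1 a2 b2 a3 b3 a4 b4 : ℝ)
    (ha1 : 1 ≤ a1) (ha3 : 1 ≤ a3)
    (ha2 : 0 ≤ a2) (ha2' : a2 < 1) (ha4 : 0 ≤ a4) (ha4' : a4 < 1)
    (hn1 : (a1, b1) ≠ (1, 0)) (hn2 : (a2, b2) ≠ (1, 0))
    (hn3 : (a3, b3) ≠ (1, 0)) (hn4 : (a4, b4) ≠ (1, 0))
    (h21 : gam a2 b2 ≤ gam a1 b1) (h32 : gam a3 b3 ≤ gam a2 b2)
    (h43 : gam a4 b4 ≤ gam a3 b3) :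
    ∀ x : ℝ,
      a4 * (a3 * (a2 * (a1 * x + b1) + b2) + b3) + b4 ≤
        max (a4 * (a1 * (a3 * (a2 * x + b2) + b3) + b1) + b4)
          (a3 * (a2 * (a4 * (a1 * x + b1) + b4) + b2) + b3) := by
  exact stmt11_general ha1 ha2' (zero_le_one.trans ha3) ha4 ha4' (h32.trans h21) h32 h43
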